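/- Let r ≥ 1 be an integer, C > 0, d ∈ ℕ, and let φ : ℝ → ℝ be continuous with c_k(φ) = 0 for all k < r and |φ(x)| ≤ C(1+|x|^d) for all x. Then there exists a sequence (φ_n) of infinitely differentiable functions ℝ → ℝ, each of whose derivatives of every order has polynomial growth, such that: (1) c_k(φ_n) = 0 for all k < r and all n; (2) φ_n converges to φ pointwise on ℝ; (3) there exists M > 0 with |φ_n(x)| ≤ M(1+|x|^{max(d, r-1)}) for all n and all x. -/

import Mathlib

/-!
Smooth, compactly supported approximants `ψ n` of `φ` are obtained by multiplying a Weierstrass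
polynomial approximation of `φ` on a large interval by a smooth cutoff; they satisfy
`|ψ n| ≤ |φ| + 1` and converge pointwise (`exists_cutoff_approx`). Their Hermite coefficients need
not vanish, but by dominated convergence `c_k(ψ n) → c_k(φ) = 0` for `k < r`, so in particular
these coefficients are bounded in `n`. The sequence sought is therefore
`φ n = ψ n - ∑_{k < r} c_k(ψ n) H_k`: the correction tends to `0` pointwise, is bounded by a
multiple of `1 + |x|^(r-1)` uniformly in `n`, and kills the first `r` coefficients by the
orthogonality relation `∫ H_j H_k dγ = k! δ_{jk}`.

Orthogonality (`integral_hermR_mul_hermR`) comes from Gaussian integration by parts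
`∫ x p dγ = ∫ p' dγ` and the recursion `H_{k+1} = x H_k - H_k'`, which together give
`∫ H_k p dγ = ∫ p^{(k)} dγ` for every polynomial `p`.
-/

open MeasureTheory ProbabilityTheory Filter

/-- The standard Gaussian measure on `ℝ`. -/
noncomputable def gaussγ : Measure ℝ := gaussianReal 0 1

/-- The `k`-th probabilists' Hermite polynomial, evaluated at `x`. -/
noncomputable def Hpoly (k : ℕ) (x : ℝ) : ℝ := Polynomial.aeval x (Polynomial.hermite k)

/-- The `k`-th Hermite coefficient of `φ` : `c_k(φ) = (1/k!) ∫ H_k φ dγ`. -/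
noncomputable def ccoef (k : ℕ) (φ : ℝ → ℝ) : ℝ :=
  (1 / (Nat.factorial k : ℝ)) * ∫ x, Hpoly k x * φ x ∂gaussγ

/-- A function `f : ℝ → ℝ` has polynomial growth. -/
def PolyGrowth (f : ℝ → ℝ) : Prop :=
  ∃ C : ℝ, 0 < C ∧ ∃ d : ℕ, ∀ x : ℝ, |f x| ≤ C * (1 + |x| ^ d)

open Polynomial

/-- The `k`-th probabilists' Hermite polynomial with real coefficients. -/
noncomputable def hermR (k : ℕ) : ℝ[X] := (hermite k).map (Int.castRingHom ℝ)

lemma Hpoly_eq (k : ℕ) (x : ℝ) : Hpoly k x = (hermR k).eval x := by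
  rw [Hpoly, hermR, Polynomial.aeval_def, Polynomial.eval_map]; rfl

lemma hermR_succ (k : ℕ) : hermR (k + 1) = X * hermR k - derivative (hermR k) := by
  simp [hermR, hermite_succ, Polynomial.derivative_map]

lemma hermR_monic (k : ℕ) : (hermR k).Monic := (hermite_monic k).map _

lemma natDegree_hermR (k : ℕ) : (hermR k).natDegree = k := by
  rw [hermR, (hermite_monic k).natDegree_map, natDegree_hermite]

instance : IsProbabilityMeasure gaussγ := by unfold gaussγ; infer_instance

/-! ### Polynomials and the Gaussian measure -/

lemma integrable_poly (p : ℝ[X]) : Integrable (fun x => p.eval x) gaussγ := by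
  simp only [Polynomial.eval_eq_sum_range]
  refine integrable_finsetSum _ fun i _ => Integrable.const_mul ?_ _
  rcases Nat.eq_zero_or_pos i with rfl | hi
  · simp
  · have h := (memLp_id_gaussianReal' (μ := 0) (v := 1) (i : ENNReal)
      (ENNReal.natCast_ne_top i)).integrable_norm_pow hi.ne'
    refine h.mono' (by fun_prop) (Eventually.of_forall fun x => ?_)
    simp

lemma integrable_pdf_mul (p : ℝ[X]) :
    Integrable (fun x => gaussianPDFReal 0 1 x * p.eval x) := by
  have h := integrable_poly p
  rw [gaussγ, gaussianReal_of_var_ne_zero 0 one_ne_zero,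
    integrable_withDensity_iff_integrable_smul' (measurable_gaussianPDF 0 1)
      (Eventually.of_forall fun x => gaussianPDF_lt_top)] at h
  simpa [toReal_gaussianPDF] using h

lemma integral_poly (p : ℝ[X]) :
    ∫ x, p.eval x ∂gaussγ = ∫ x, gaussianPDFReal 0 1 x * p.eval x := by
  rw [gaussγ, integral_gaussianReal_eq_integral_smul one_ne_zero]
  rfl

lemma hasDerivAt_pdf (x : ℝ) :
    HasDerivAt (gaussianPDFReal 0 1) (-x * gaussianPDFReal 0 1 x) x := by
  rw [gaussianPDFReal_def]
  have h : HasDerivAt (fun y : ℝ => -(y - 0) ^ 2 / (2 * ((1 : NNReal) : ℝ))) (-x) x := by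
    have := (((hasDerivAt_id x).sub_const 0).pow 2).neg.div_const (2 * ((1 : NNReal) : ℝ))
    exact this.congr_deriv (by simp; ring)
  exact (h.exp.const_mul (√(2 * Real.pi * ((1 : NNReal) : ℝ)))⁻¹).congr_deriv (by ring)

/-- Gaussian integration by parts for polynomials. -/
lemma stein (p : ℝ[X]) :
    ∫ x, (X * p).eval x ∂gaussγ = ∫ x, (derivative p).eval x ∂gaussγ := by
  have key : ∫ x, gaussianPDFReal 0 1 x * (derivative p - X * p).eval x = 0 := by
    refine integral_eq_zero_of_hasDerivAt_of_integrable
      (f := fun x => gaussianPDFReal 0 1 x * p.eval x) (fun x => ?_)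
      (integrable_pdf_mul _) (integrable_pdf_mul _)
    exact ((hasDerivAt_pdf x).mul (p.hasDerivAt x)).congr_deriv
      (by simp only [eval_sub, eval_mul, eval_X]; ring)
  rw [← integral_poly] at key
  simp only [Polynomial.eval_sub] at key
  rw [integral_sub (integrable_poly _) (integrable_poly _)] at key
  linarith

/-- Iterated Gaussian integration by parts: each step lowers the index of `H_k` by one and
differentiates `p` once. -/
lemma integral_hermR_mul (k : ℕ) (p : ℝ[X]) :
    ∫ x, (hermR k * p).eval x ∂gaussγ = ∫ x, (derivative^[k] p).eval x ∂gaussγ := by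
  induction k generalizing p with
  | zero => simp [hermR]
  | succ k ih =>
    have e : hermR (k + 1) * p = X * (hermR k * p) - derivative (hermR k) * p := by
      rw [hermR_succ]; ring
    rw [e, Function.iterate_succ_apply, ← ih]
    simp only [Polynomial.eval_sub]
    rw [integral_sub (integrable_poly _) (integrable_poly _), stein, derivative_mul]
    simp only [Polynomial.eval_add]
    rw [integral_add (integrable_poly _) (integrable_poly _)]
    ring

lemma integral_hermR_mul_hermR (j k : ℕ) :
    ∫ x, (hermR j * hermR k).eval x ∂gaussγ = if j = k then (k.factorial : ℝ) else 0 := by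
  -- For `b < a` the derivative of order `a` kills `H_b`; the other case follows by symmetry.
  have lt (a b : ℕ) (h : b < a) : ∫ x, (hermR a * hermR b).eval x ∂gaussγ = 0 := by
    rw [integral_hermR_mul, iterate_derivative_eq_zero (by rwa [natDegree_hermR])]
    simp
  split_ifs with h
  · subst h
    have e : derivative^[j] (hermR j) = C (j.factorial : ℝ) := by
      have h0 : (derivative^[j] (hermR j)).natDegree = 0 := by
        have := natDegree_iterate_derivative (hermR j) j
        rw [natDegree_hermR] at this
        omega
      rw [eq_C_of_natDegree_eq_zero h0, coeff_iterate_derivative]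
      have hc : (hermR j).coeff j = 1 := by
        have := hermR_monic j
        rwa [Monic, leadingCoeff, natDegree_hermR] at this
      simp [hc, Nat.descFactorial_self]
    rw [integral_hermR_mul, e]
    simp
  · rcases lt_or_gt_of_ne h with h | h
    · rw [mul_comm]; exact lt k j h
    · exact lt j k h

/-! ### Polynomial growth -/

lemma pow_le_one_add_pow {x : ℝ} (hx : 0 ≤ x) {i m : ℕ} (h : i ≤ m) : x ^ i ≤ 1 + x ^ m := by
  rcases le_total x 1 with h1 | h1
  · have := pow_le_one₀ (n := i) hx h1
    have := pow_nonneg hx m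
    linarith
  · have := pow_le_pow_right₀ h1 h
    linarith

lemma poly_bound (p : ℝ[X]) {m : ℕ} (h : p.natDegree ≤ m) :
    ∃ B : ℝ, 0 < B ∧ ∀ x, |p.eval x| ≤ B * (1 + |x| ^ m) := by
  refine ⟨1 + ∑ i ∈ Finset.range (p.natDegree + 1), |p.coeff i|, by positivity, fun x => ?_⟩
  rw [Polynomial.eval_eq_sum_range]
  have h1 : |∑ i ∈ Finset.range (p.natDegree + 1), p.coeff i * x ^ i|
      ≤ (∑ i ∈ Finset.range (p.natDegree + 1), |p.coeff i|) * (1 + |x| ^ m) := by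
    rw [Finset.sum_mul]
    refine (Finset.abs_sum_le_sum_abs _ _).trans (Finset.sum_le_sum fun i hi => ?_)
    rw [abs_mul, abs_pow]
    refine mul_le_mul_of_nonneg_left (pow_le_one_add_pow (abs_nonneg x) ?_) (abs_nonneg _)
    have := Finset.mem_range.1 hi
    omega
  have : 0 ≤ |x| ^ m := by positivity
  linarith

lemma contDiff_poly (p : ℝ[X]) {n : WithTop ℕ∞} : ContDiff ℝ n (fun x => p.eval x) := by
  simpa using p.contDiff_aeval (𝕜 := ℝ) (n := n)

lemma PolyGrowth.of_poly (p : ℝ[X]) : PolyGrowth (fun x => p.eval x) := by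
  obtain ⟨B, hB, h⟩ := poly_bound p le_rfl
  exact ⟨B, hB, _, h⟩

lemma PolyGrowth.sub {f g : ℝ → ℝ} (hf : PolyGrowth f) (hg : PolyGrowth g) :
    PolyGrowth (fun x => f x - g x) := by
  obtain ⟨A, hA, a, ha⟩ := hf
  obtain ⟨B, hB, b, hb⟩ := hg
  refine ⟨2 * A + 2 * B, by positivity, max a b, fun x => ?_⟩
  have h1 := pow_le_one_add_pow (abs_nonneg x) (le_max_left a b)
  have h2 := pow_le_one_add_pow (abs_nonneg x) (le_max_right a b)
  have h0 : 0 ≤ |x| ^ max a b := by positivity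
  calc |f x - g x| ≤ |f x| + |g x| := abs_sub _ _
    _ ≤ A * (1 + |x| ^ a) + B * (1 + |x| ^ b) := add_le_add (ha x) (hb x)
    _ ≤ A * (2 * (1 + |x| ^ max a b)) + B * (2 * (1 + |x| ^ max a b)) := by
        gcongr <;> linarith
    _ = _ := by ring

lemma iteratedDeriv_poly (p : ℝ[X]) (i : ℕ) :
    iteratedDeriv i (fun x => p.eval x) = fun x => (derivative^[i] p).eval x := by
  induction i generalizing p with
  | zero => simp
  | succ i ih =>
    rw [iteratedDeriv_succ']
    have : deriv (fun x => p.eval x) = fun x => (derivative p).eval x := by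
      ext x; simp
    rw [this, ih, Function.iterate_succ_apply]

lemma PolyGrowth.iteratedDeriv_of_compact {f : ℝ → ℝ} (hf : ContDiff ℝ (⊤ : ℕ∞) f)
    (hs : HasCompactSupport f) (i : ℕ) : PolyGrowth (iteratedDeriv i f) := by
  have hsi : HasCompactSupport (iteratedDeriv i f) := by
    induction i with
    | zero => simpa using hs
    | succ i ih => rw [iteratedDeriv_succ]; exact ih.deriv
  obtain ⟨B, hB⟩ := hsi.exists_bound_of_continuous
    (hf.continuous_iteratedDeriv i (by exact_mod_cast le_top))
  refine ⟨|B| + 1, by positivity, 0, fun x => ?_⟩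
  have := hB x
  rw [Real.norm_eq_abs] at this
  have := le_abs_self B
  have := abs_nonneg B
  simp only [pow_zero]
  linarith

/-! ### The approximating sequence -/

/-- The function `ψ` is a smooth cutoff, equal to `1` on `[-(n+1), n+1]`, times a polynomial within
`1/(n+1)` of `φ` on the support of the cutoff. -/
lemma exists_cutoff_approx {φ : ℝ → ℝ} (hφ : Continuous φ) (n : ℕ) :
    ∃ ψ : ℝ → ℝ, ContDiff ℝ (⊤ : ℕ∞) ψ ∧ HasCompactSupport ψ ∧
      (∀ x, |ψ x| ≤ |φ x| + 1) ∧
      (∀ x : ℝ, |x| ≤ n + 1 → |ψ x - φ x| ≤ 1 / ((n : ℝ) + 1)) := by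
  have hn : (0 : ℝ) < (n : ℝ) + 1 := by positivity
  obtain ⟨p, hp⟩ := exists_polynomial_near_of_continuousOn (-((n : ℝ) + 2)) (n + 2) φ
    hφ.continuousOn (1 / ((n : ℝ) + 1)) (by positivity)
  let χ : ContDiffBump (0 : ℝ) := ⟨n + 1, n + 2, hn, by linarith⟩
  refine ⟨fun x => χ x * p.eval x, χ.contDiff.mul (contDiff_poly p), χ.hasCompactSupport.mul_right,
    fun x => ?_, fun x hx => ?_⟩
  · rcases le_or_gt (|x|) ((n : ℝ) + 2) with h | h
    · have h1 := hp x (abs_le.1 h)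
      have h2 : 1 / ((n : ℝ) + 1) ≤ 1 := by
        rw [div_le_one hn]; have := n.cast_nonneg (α := ℝ); linarith
      have h3 : |p.eval x| ≤ |φ x| + 1 := by
        have := abs_sub_abs_le_abs_sub (p.eval x) (φ x)
        linarith
      simp only [abs_mul, abs_of_nonneg χ.nonneg]
      exact (mul_le_of_le_one_left (abs_nonneg _) χ.le_one).trans h3
    · have : χ x = 0 := χ.zero_of_le_dist (by simpa [χ] using h.le)
      simp only [this, zero_mul, abs_zero]
      positivity
  · have : χ x = 1 := χ.one_of_mem_closedBall (by simpa [χ] using hx)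
    simp only [this, one_mul]
    refine (hp x (abs_le.1 ?_)).le
    linarith

/-- Integrability of the function dominating `H_k f` when `|f x| ≤ B (1 + |x|^d)`. -/
lemma integrable_dom (k : ℕ) (B : ℝ) (d : ℕ) :
    Integrable (fun x => |(hermR k).eval x| * (B * (1 + |x| ^ d))) gaussγ := by
  have h := (integrable_poly (hermR k * C B)).norm.add
    (integrable_poly (hermR k * C B * X ^ d)).norm
  refine h.mono (by fun_prop) (Eventually.of_forall fun x => le_of_eq ?_)
  have hx : 0 ≤ |x| ^ d := by positivity
  simp only [Pi.add_apply, eval_mul, eval_C, eval_pow, eval_X, Real.norm_eq_abs, abs_mul, abs_pow,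
    abs_abs]
  rw [abs_of_nonneg (by positivity : 0 ≤ 1 + |x| ^ d), ← mul_one_add,
    abs_of_nonneg (by positivity : 0 ≤ |(hermR k).eval x| * |B| * (1 + |x| ^ d))]
  ring

/-- By orthogonality, subtracting `∑_{j < r} a_j H_j` lowers the `k`-th coefficient by `a_k`. -/
lemma ccoef_sub_poly {f : ℝ → ℝ} {r k : ℕ} (a : ℕ → ℝ) (hk : k < r)
    (hf : Integrable (fun x => Hpoly k x * f x) gaussγ) :
    ccoef k (fun x => f x - (∑ j ∈ Finset.range r, C (a j) * hermR j).eval x)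
      = ccoef k f - a k := by
  have hI : ∫ x, Hpoly k x * (∑ j ∈ Finset.range r, C (a j) * hermR j).eval x ∂gaussγ
      = a k * (k.factorial : ℝ) := by
    have e : ∀ x, Hpoly k x * (∑ j ∈ Finset.range r, C (a j) * hermR j).eval x
        = ∑ j ∈ Finset.range r, a j * (hermR k * hermR j).eval x := by
      intro x
      rw [Hpoly_eq, eval_finsetSum, Finset.mul_sum]
      refine Finset.sum_congr rfl fun j _ => ?_
      simp only [eval_mul, eval_C]
      ring
    simp only [e]
    rw [integral_finsetSum _ fun j _ => (integrable_poly _).const_mul _]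
    simp only [integral_const_mul, integral_hermR_mul_hermR]
    simp only [mul_ite, mul_zero]
    rw [Finset.sum_ite_eq, if_pos (Finset.mem_range.2 hk)]
  have hP : Integrable
      (fun x => Hpoly k x * (∑ j ∈ Finset.range r, C (a j) * hermR j).eval x) gaussγ := by
    simp only [Hpoly_eq, ← eval_mul]
    exact integrable_poly _
  have hk0 : (k.factorial : ℝ) ≠ 0 := by positivity
  simp only [ccoef, mul_sub]
  rw [integral_sub hf hP, hI]
  field_simp

/-- Smooth approximation preserving the Hermite-rank constraint: for continuous `φ` with
`c_k(φ) = 0` for `k < r` and `|φ(x)| ≤ C(1+|x|^d)`, there is a sequence `(φ_n)` of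
smooth functions, all of whose derivatives have polynomial growth, with the same
vanishing Hermite coefficients, converging pointwise to `φ` and uniformly dominated by
`M (1+|x|^{max(d, r-1)})` for some `M > 0`. -/
theorem stmt_16 (r : ℕ) (hr : 1 ≤ r) (C : ℝ) (hC : 0 < C) (d : ℕ) (φ : ℝ → ℝ)
    (hcont : Continuous φ) (hrank : ∀ k : ℕ, k < r → ccoef k φ = 0)
    (hbound : ∀ x : ℝ, |φ x| ≤ C * (1 + |x| ^ d)) :
    ∃ φseq : ℕ → ℝ → ℝ,
      (∀ n, ContDiff ℝ (⊤ : ℕ∞) (φseq n)) ∧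
      (∀ n, ∀ i : ℕ, PolyGrowth (iteratedDeriv i (φseq n))) ∧
      (∀ n, ∀ k : ℕ, k < r → ccoef k (φseq n) = 0) ∧
      (∀ x : ℝ, Tendsto (fun n => φseq n x) atTop (nhds (φ x))) ∧
      (∃ M : ℝ, 0 < M ∧ ∀ n, ∀ x : ℝ, |φseq n x| ≤ M * (1 + |x| ^ max d (r - 1))) := by
  choose ψ hsm hcs hψb hψa using fun n : ℕ => exists_cutoff_approx hcont n
  have hψB : ∀ n x, |ψ n x| ≤ (C + 1) * (1 + |x| ^ d) := fun n x => by
    have h1 := hψb n x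
    have h2 := hbound x
    have h3 : 0 ≤ |x| ^ d := by positivity
    linarith
  have hlim : ∀ x, Tendsto (fun n => ψ n x) atTop (nhds (φ x)) := fun x => by
    rw [tendsto_iff_dist_tendsto_zero]
    refine squeeze_zero' (Eventually.of_forall fun n => dist_nonneg) ?_
      tendsto_one_div_add_atTop_nhds_zero_nat
    obtain ⟨N, hN⟩ := exists_nat_ge |x|
    filter_upwards [eventually_ge_atTop N] with n hn
    rw [Real.dist_eq]
    refine hψa n x ?_
    have : (N : ℝ) ≤ n := by exact_mod_cast hn
    linarith
  have hmeas : ∀ n k, AEStronglyMeasurable (fun x => Hpoly k x * ψ n x) gaussγ := fun n k => by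
    simp only [Hpoly_eq]
    exact ((hermR k).continuous.mul (hsm n).continuous).aestronglyMeasurable
  have hdom : ∀ n k x,
      ‖Hpoly k x * ψ n x‖ ≤ |(hermR k).eval x| * ((C + 1) * (1 + |x| ^ d)) := fun n k x => by
    rw [Hpoly_eq, Real.norm_eq_abs, abs_mul]
    exact mul_le_mul_of_nonneg_left (hψB n x) (abs_nonneg _)
  have hint : ∀ n k, Integrable (fun x => Hpoly k x * ψ n x) gaussγ := fun n k =>
    (integrable_dom k (C + 1) d).mono' (hmeas n k) (Eventually.of_forall (hdom n k))
  have hcoef : ∀ k, k < r → Tendsto (fun n => ccoef k (ψ n)) atTop (nhds 0) := fun k hk => by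
    rw [← hrank k hk]
    refine Tendsto.const_mul _ ?_
    exact tendsto_integral_of_dominated_convergence _ (fun n => hmeas n k)
      (integrable_dom k (C + 1) d) (fun n => Eventually.of_forall (hdom n k))
      (Eventually.of_forall fun x => (hlim x).const_mul _)
  let Q : ℕ → ℝ[X] := fun n =>
    ∑ j ∈ Finset.range r, Polynomial.C (ccoef j (ψ n)) * hermR j
  have hQ : ∀ n x, (Q n).eval x
      = ∑ j ∈ Finset.range r, ccoef j (ψ n) * (hermR j).eval x := fun n x => by
    simp [Q, eval_finsetSum]
  refine ⟨fun n x => ψ n x - (Q n).eval x, fun n => (hsm n).sub (contDiff_poly _), fun n i => ?_,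
    fun n k hk => ?_, fun x => ?_, ?_⟩
  · have e : iteratedDeriv i (fun x => ψ n x - (Q n).eval x)
        = fun x => iteratedDeriv i (ψ n) x - (derivative^[i] (Q n)).eval x := by
      ext x
      rw [iteratedDeriv_fun_sub ((hsm n).contDiffAt.of_le (by exact_mod_cast le_top))
        (contDiff_poly _).contDiffAt, iteratedDeriv_poly]
    rw [e]
    exact (PolyGrowth.iteratedDeriv_of_compact (hsm n) (hcs n) i).sub (PolyGrowth.of_poly _)
  · rw [ccoef_sub_poly (fun j => ccoef j (ψ n)) hk (hint n k), sub_self]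
  · have h : Tendsto (fun n => (Q n).eval x) atTop (nhds 0) := by
      simp only [hQ]
      rw [← Finset.sum_const_zero (s := Finset.range r)]
      refine tendsto_finsetSum _ fun j hj => ?_
      simpa using (hcoef j (Finset.mem_range.1 hj)).mul_const ((hermR j).eval x)
    simpa using (hlim x).sub h
  · have hA : ∀ j, ∃ A : ℝ, 0 ≤ A ∧ (j < r → ∀ n, |ccoef j (ψ n)| ≤ A) := fun j => by
      by_cases hj : j < r
      · obtain ⟨A, hA⟩ := (hcoef j hj).abs.bddAbove_range
        have hA' : ∀ n, |ccoef j (ψ n)| ≤ A := fun n => hA ⟨n, rfl⟩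
        exact ⟨A, (abs_nonneg _).trans (hA' 0), fun _ => hA'⟩
      · exact ⟨0, le_rfl, fun h => absurd h hj⟩
    choose A hA0 hA using hA
    have hH : ∀ j, ∃ B : ℝ, 0 < B ∧
        (j < r → ∀ x, |(hermR j).eval x| ≤ B * (1 + |x| ^ max d (r - 1))) := fun j => by
      by_cases hj : j < r
      · obtain ⟨B, hB, h⟩ := poly_bound (hermR j) (m := max d (r - 1))
          (by rw [natDegree_hermR]; exact le_max_of_le_right (by omega))
        exact ⟨B, hB, fun _ => h⟩
      · exact ⟨1, one_pos, fun h => absurd h hj⟩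
    choose B hB0 hB using hH
    have hS : 0 ≤ ∑ j ∈ Finset.range r, A j * B j :=
      Finset.sum_nonneg fun j _ => mul_nonneg (hA0 j) (hB0 j).le
    refine ⟨2 * (C + 1) + ∑ j ∈ Finset.range r, A j * B j, by linarith, fun n x => ?_⟩
    have h1 : |ψ n x| ≤ 2 * (C + 1) * (1 + |x| ^ max d (r - 1)) := by
      have h2 := pow_le_one_add_pow (abs_nonneg x) (le_max_left d (r - 1))
      have h3 : 0 ≤ |x| ^ max d (r - 1) := by positivity
      refine (hψB n x).trans ?_
      rw [mul_comm 2, mul_assoc]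
      exact mul_le_mul_of_nonneg_left (by linarith) (by linarith)
    have h2 : |(Q n).eval x|
        ≤ (∑ j ∈ Finset.range r, A j * B j) * (1 + |x| ^ max d (r - 1)) := by
      rw [hQ, Finset.sum_mul]
      refine (Finset.abs_sum_le_sum_abs _ _).trans (Finset.sum_le_sum fun j hj => ?_)
      have hj := Finset.mem_range.1 hj
      rw [abs_mul, mul_assoc]
      exact mul_le_mul (hA j hj n) (hB j hj x) (abs_nonneg _) (hA0 j)
    rw [add_mul]
    exact (abs_sub _ _).trans (add_le_add h1 h2)
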